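/- arXiv:2207.00766 — 2 statements merged into one kernel-verified Lean document; each statement's English description precedes it below -/
import Mathlib

section
/- Let (h_k)_{k≥0} be the rational sequence defined by h_0 = 1 and h_k = (k+1)/k · Σ_{j_1+j_2 = k−1, j_i ≥ 0} h_{j_1}·h_{j_2} for k ≥ 1, and define d_k := k!·h_k/(k+1) for k ≥ 1. Then for every k ≥ 1, (k+1)·d_k = 2^k·(k+1)^{k-1}; equivalently, d_k = 2^k·(k+1)^{k-2} for k ≥ 2 and d_1 = 1. -/
/-!
Write `A_n(x) = x (x + a n)^(n-1)` for the Abel polynomials. They satisfy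
`A_{n+1}' = (n + 1) A_n(x + a)` and vanish at `0` for positive index, which forces them to be of
binomial type. For `a = 2` this turns the quadratic convolution recurrence into
`A_{n+1}(2) = (n + 2) A_n(2 + 2)`, so that `k! h_k = A_k(2) = 2 (2 k + 2)^(k-1)`.
-/

open Polynomial Finset Nat

section BinomialType

variable {R : Type*}

lemma derivative_taylor [CommSemiring R] (r : R) (p : R[X]) :
    derivative (taylor r p) = taylor r (derivative p) := by
  simp [taylor_apply, derivative_comp]

lemma eq_of_derivative_eq_of_eval_zero_eq [Ring R] [IsAddTorsionFree R] {p q : R[X]}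
    (hderiv : derivative p = derivative q) (heval : p.eval 0 = q.eval 0) : p = q := by
  have hconst : p - q = C ((p - q).coeff 0) :=
    eq_C_of_derivative_eq_zero (by rw [derivative_sub, hderiv, sub_self])
  rwa [coeff_zero_eq_eval_zero, eval_sub, heval, sub_self, C_0, sub_eq_zero] at hconst

theorem sum_choose_smul_mul_C_eval_eq_taylor [CommRing R] [IsAddTorsionFree R] {a : R}
    {p : ℕ → R[X]} (hzero : p 0 = 1) (heval : ∀ n, (p (n + 1)).eval 0 = 0)
    (hderiv : ∀ n, derivative (p (n + 1)) = (n + 1) • taylor a (p n)) (y : R) (n : ℕ) :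
    ∑ ij ∈ antidiagonal n, n.choose ij.1 • (p ij.1 * C ((p ij.2).eval y)) = taylor y (p n) := by
  induction n with
  | zero => simp [hzero]
  | succ n ih =>
    apply eq_of_derivative_eq_of_eval_zero_eq
    · calc derivative (∑ ij ∈ antidiagonal (n + 1),
            (n + 1).choose ij.1 • (p ij.1 * C ((p ij.2).eval y)))
        _ = ∑ ij ∈ antidiagonal n, ((n + 1).choose (ij.1 + 1) * (ij.1 + 1)) •
              (taylor a (p ij.1) * C ((p ij.2).eval y)) := by
          simp [Nat.sum_antidiagonal_succ, hzero, hderiv, mul_smul, mul_assoc]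
        _ = (n + 1) • taylor a (∑ ij ∈ antidiagonal n,
              n.choose ij.1 • (p ij.1 * C ((p ij.2).eval y))) := by
          simp only [← add_one_mul_choose_eq, mul_smul, map_sum, map_nsmul, taylor_mul, taylor_C,
            smul_sum]
        _ = derivative (taylor y (p (n + 1))) := by
          rw [ih, derivative_taylor, hderiv, map_nsmul, taylor_taylor, taylor_taylor, add_comm a y]
    · simp [Nat.sum_antidiagonal_succ, eval_finsetSum, hzero, heval, taylor_eval]

end BinomialType

section AbelPolynomial

variable {R : Type*}

/-- The Abel polynomial `X (X + n a)^(n-1)`, read as `1` for `n = 0`. The usual convention is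
`X (X - n a)^(n-1)`; the opposite sign makes sense over semirings. -/
noncomputable def abelPoly [CommSemiring R] (a : R) : ℕ → R[X]
  | 0 => 1
  | n + 1 => X * (X + C ((n + 1) * a)) ^ n

lemma eval_zero_abelPoly_succ [CommSemiring R] (a : R) (n : ℕ) :
    (abelPoly a (n + 1)).eval 0 = 0 := by
  simp [abelPoly]

lemma eval_abelPoly_succ [CommSemiring R] (a x : R) (n : ℕ) :
    (abelPoly a (n + 1)).eval x = x * (x + (n + 1) * a) ^ n := by
  simp [abelPoly]

lemma derivative_abelPoly_succ [CommSemiring R] (a : R) (n : ℕ) :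
    derivative (abelPoly a (n + 1)) = (n + 1) • taylor a (abelPoly a n) := by
  cases n with
  | zero => simp [abelPoly]
  | succ n =>
    have hshift : (X : R[X]) + C a + C ((n + 1) * a) = X + C ((n + 1 + 1) * a) := by
      rw [add_assoc, ← C_add]
      ring_nf
    have htaylor : taylor a (abelPoly a (n + 1)) =
        (X + C a) * (X + C ((n + 1 + 1) * a)) ^ n := by
      rw [abelPoly, taylor_mul, taylor_pow, map_add, taylor_X, taylor_C, hshift]
    rw [htaylor, abelPoly, derivative_mul, derivative_X, derivative_X_add_C_pow]
    simp only [cast_add, cast_one, map_mul, map_add, map_natCast, map_one, one_mul,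
      add_tsub_cancel_right, nsmul_eq_mul]
    ring

theorem sum_choose_mul_eval_abelPoly [CommRing R] [IsAddTorsionFree R] (a x y : R) (n : ℕ) :
    ∑ ij ∈ antidiagonal n,
      (n.choose ij.1 : R) * ((abelPoly a ij.1).eval x * (abelPoly a ij.2).eval y) =
        (abelPoly a n).eval (x + y) := by
  have hpoly := sum_choose_smul_mul_C_eval_eq_taylor rfl (eval_zero_abelPoly_succ a)
    (derivative_abelPoly_succ a) y n
  simpa [eval_finsetSum, taylor_eval] using congrArg (eval x) hpoly

end AbelPolynomial

section Recurrence

lemma factorial_mul_sum_antidiagonal {R : Type*} [CommSemiring R] (f g : ℕ → R) (n : ℕ) :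
    n ! * ∑ ij ∈ antidiagonal n, f ij.1 * g ij.2 =
      ∑ ij ∈ antidiagonal n, (n.choose ij.1 : R) * ((ij.1 ! * f ij.1) * (ij.2 ! * g ij.2)) := by
  rw [mul_sum]
  refine sum_congr rfl fun ⟨i, j⟩ hij => ?_
  obtain rfl : i + j = n := mem_antidiagonal.mp hij
  rw [choose_symm_add, ← add_choose_mul_factorial_mul_factorial, Nat.cast_mul, Nat.cast_mul]
  ring

lemma eval_two_abelPoly_two_succ {R : Type*} [CommSemiring R] (n : ℕ) :
    (abelPoly (2 : R) (n + 1)).eval 2 = 2 ^ (n + 1) * (n + 2) ^ n := by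
  rw [eval_abelPoly_succ, show (2 : R) + (n + 1) * 2 = 2 * (n + 2) by ring, mul_pow]
  ring

lemma add_two_mul_eval_four_abelPoly_two {R : Type*} [CommSemiring R] (n : ℕ) :
    (n + 2) * (abelPoly (2 : R) n).eval (2 + 2) = (abelPoly (2 : R) (n + 1)).eval 2 := by
  cases n with
  | zero => simp [abelPoly]
  | succ n =>
    simp only [eval_abelPoly_succ]
    push_cast
    ring

theorem factorial_mul_eq_eval_abelPoly {R : Type*} [CommRing R] [IsAddTorsionFree R] {h : ℕ → R}
    (h0 : h 0 = 1)
    (hrec : ∀ n : ℕ, (n + 1) * h (n + 1) = (n + 2) * ∑ ij ∈ antidiagonal n, h ij.1 * h ij.2)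
    (k : ℕ) : k ! * h k = (abelPoly 2 k).eval 2 := by
  induction k using Nat.strong_induction_on with
  | _ k ih =>
    cases k with
    | zero => simp [h0, abelPoly]
    | succ n =>
      have hconv : n ! * ∑ ij ∈ antidiagonal n, h ij.1 * h ij.2 =
          (abelPoly 2 n).eval (2 + 2) := by
        rw [factorial_mul_sum_antidiagonal, ← sum_choose_mul_eval_abelPoly]
        refine sum_congr rfl fun ij hij => ?_
        rw [ih ij.1 (Nat.antidiagonal.fst_lt hij),
          ih ij.2 (Nat.antidiagonal.snd_lt hij)]
      calc ((n + 1)! : R) * h (n + 1) = n ! * ((n + 1) * h (n + 1)) := by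
            rw [factorial_succ]; push_cast; ring
        _ = (n + 2) * (n ! * ∑ ij ∈ antidiagonal n, h ij.1 * h ij.2) := by rw [hrec]; ring
        _ = (abelPoly 2 (n + 1)).eval 2 := by rw [hconv, add_two_mul_eval_four_abelPoly_two]

end Recurrence

theorem stmt_2_general {K : Type*} [Field K] [CharZero K] (h : ℕ → K)
    (h0 : h 0 = 1)
    (hrec : ∀ k : ℕ, 1 ≤ k →
      h k = (((k + 1 : ℕ) : K) / (k : K)) *
        ∑ j ∈ Finset.HasAntidiagonal.antidiagonal (k - 1), h j.1 * h j.2)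
    (d : ℕ → K)
    (hd : ∀ k : ℕ, 1 ≤ k → d k = (Nat.factorial k : K) * h k / ((k + 1 : ℕ) : K)) :
    (∀ k : ℕ, 1 ≤ k → ((k + 1 : ℕ) : K) * d k = 2 ^ k * ((k + 1 : ℕ) : K) ^ (k - 1))
      ∧ (∀ k : ℕ, 2 ≤ k → d k = 2 ^ k * ((k + 1 : ℕ) : K) ^ (k - 2))
      ∧ d 1 = 1 := by
  have hrec_succ (n : ℕ) :
      ((n : K) + 1) * h (n + 1) = (n + 2) * ∑ ij ∈ antidiagonal n, h ij.1 * h ij.2 := by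
    rw [hrec (n + 1) (by lia), Nat.add_sub_cancel]
    push_cast
    field_simp
    ring
  have hsucc_mul (n : ℕ) : ((n + 2 : ℕ) : K) * d (n + 1) = 2 ^ (n + 1) * ((n + 2 : ℕ) : K) ^ n := by
    rw [hd (n + 1) (by lia), mul_div_cancel₀ _ (Nat.cast_ne_zero.mpr (by lia)),
      factorial_mul_eq_eval_abelPoly h0 hrec_succ, eval_two_abelPoly_two_succ]
    push_cast
    rfl
  refine ⟨fun k hk => ?_, fun k hk => ?_, ?_⟩
  · obtain ⟨n, rfl⟩ := Nat.exists_eq_add_of_le' hk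
    exact hsucc_mul n
  · obtain ⟨n, rfl⟩ := Nat.exists_eq_add_of_le' hk
    refine mul_left_cancel₀ (Nat.cast_ne_zero.mpr (by lia)) ((hsucc_mul (n + 1)).trans ?_)
    simp only [Nat.add_sub_cancel]
    ring
  · simpa using hsucc_mul 0

/-- The case `q = 2`: with `h 0 = 1`,
`h k = (k+1)/k · ∑_{j₁+j₂=k-1} h j₁ · h j₂` for `k ≥ 1`, and
`d k := k!·h k/(k+1)`, one has `(k+1)·d k = 2^k·(k+1)^(k-1)` for all `k ≥ 1`;
equivalently `d k = 2^k·(k+1)^(k-2)` for `k ≥ 2` and `d 1 = 1`. -/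
theorem stmt_2 (h : ℕ → ℚ)
    (h0 : h 0 = 1)
    (hrec : ∀ k : ℕ, 1 ≤ k →
      h k = (((k + 1 : ℕ) : ℚ) / (k : ℚ)) *
        ∑ j ∈ Finset.HasAntidiagonal.antidiagonal (k - 1), h j.1 * h j.2)
    (d : ℕ → ℚ)
    (hd : ∀ k : ℕ, 1 ≤ k → d k = (Nat.factorial k : ℚ) * h k / ((k + 1 : ℕ) : ℚ)) :
    (∀ k : ℕ, 1 ≤ k → ((k + 1 : ℕ) : ℚ) * d k = 2 ^ k * ((k + 1 : ℕ) : ℚ) ^ (k - 1))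
      ∧ (∀ k : ℕ, 2 ≤ k → d k = 2 ^ k * ((k + 1 : ℕ) : ℚ) ^ (k - 2))
      ∧ d 1 = 1 :=
  stmt_2_general h h0 hrec d hd
end

section
/- Fix an integer q ≥ 2. As formal power series in ℚ[[z]], exp( q · Σ_{k≥1} (q(q-1))^{k-1}·k^{k-1}·z^k/k! ) = Σ_{k≥0} q^k·((q-1)k+1)^{k-1}·z^k/k!. -/
open PowerSeries

/-- The formal exponential `exp F = ∑_{n≥0} Fⁿ/n!` of a formal power series `F ∈ ℚ[[z]]`
with zero constant term, given coefficient-wise. -/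
noncomputable def expPS (F : PowerSeries ℚ) : PowerSeries ℚ :=
  PowerSeries.mk fun n =>
    ∑ m ∈ Finset.range (n + 1), (PowerSeries.coeff n (F ^ m)) / (Nat.factorial m : ℚ)

/-!
Let `ψ` be the exponential generating function of `(a n)^(n-1)`. Then `H = exp(x ψ)` is determined
by `H(0) = 1` and `H' = x ψ' H`. That the exponential generating function of the Abel polynomials
`x (x + a n)^(n-1)` satisfies this equation is, coefficient by coefficient, Abel's binomial identity
`∑ k, C(n,k) x (x + a k)^(k-1) (y - a k)^(n-k) = (x + y)^n` at `y = a (n + 1)`; that identity holds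
because the `N`-th difference of a polynomial of degree less than `N` vanishes. The powers of `q` in
question are the case `x = q`, `a = q (q - 1)`.
-/

open Finset
open scoped Nat

section Abel

/-- The Abel polynomials `x (x + a n)^(n-1)`, the values of `x` and `a` being fixed. The formula
at `n = 0` is read as `1`. -/
def abelSeq {R : Type*} [CommSemiring R] (x a : R) : ℕ → R
  | 0 => 1
  | n + 1 => x * (x + a * (n + 1)) ^ n

/-- The weighted Cayley numbers `(a n)^(n-1)`, with value `0` at `n = 0`. Their exponential
generating function is the solution `ψ` of the tree equation `ψ = z exp(a ψ)`. -/
def treeSeq {R : Type*} [CommSemiring R] (a : R) : ℕ → R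
  | 0 => 0
  | n + 1 => (a * (n + 1)) ^ n

theorem sum_choose_mul_add_pow {R : Type*} [CommSemiring R] (c b : ℕ → R) (s : R) (n : ℕ) :
    ∑ i ∈ range (n + 1), n.choose i * c i * (s + b i) ^ (n - i) =
      ∑ m ∈ range (n + 1), n.choose m * s ^ (n - m) *
        ∑ i ∈ range (m + 1), m.choose i * c i * b i ^ (m - i) := by
  have expand (i : ℕ) (hi : i ∈ range (n + 1)) :
      n.choose i * c i * (s + b i) ^ (n - i) = ∑ m ∈ Ico i (n + 1),
        n.choose m * s ^ (n - m) * (m.choose i * c i * b i ^ (m - i)) := by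
    have hin : i ≤ n := mem_range_succ_iff.mp hi
    rw [add_comm s, add_pow, mul_sum, sum_Ico_eq_sum_range, Nat.sub_add_comm hin]
    refine sum_congr rfl fun v _ ↦ ?_
    have hchoose : (n.choose (i + v) * (i + v).choose i : R) = n.choose i * (n - i).choose v := by
      have h := Nat.choose_mul (n := n) (Nat.le_add_right i v)
      rw [Nat.add_sub_cancel_left] at h
      exact_mod_cast congrArg (Nat.cast (R := R)) h
    rw [Nat.add_sub_cancel_left, ← Nat.sub_sub]
    calc n.choose i * c i * (b i ^ v * s ^ (n - i - v) * (n - i).choose v)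
      _ = n.choose i * (n - i).choose v * (c i * b i ^ v * s ^ (n - i - v)) := by ring
      _ = n.choose (i + v) * s ^ (n - i - v) * ((i + v).choose i * c i * b i ^ v) := by
        rw [← hchoose]
        ring
  rw [sum_congr rfl expand, sum_comm' (t' := range (n + 1)) (s' := fun m ↦ range (m + 1))]
  · simp only [mul_sum]
  · simp only [mem_range, mem_Ico]
    omega

variable {R : Type*} [CommRing R] (x a : R)

theorem sum_choose_mul_neg_one_pow_mul_linear_pow {n N : ℕ} (h : n < N) :
    ∑ k ∈ range (N + 1), N.choose k * (-1) ^ (N - k) * (x + a * k) ^ n = 0 := by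
  let P : Polynomial R := (.C a * .X + .C x) ^ n
  have hdeg : P.natDegree < N :=
    (Polynomial.natDegree_pow_le_of_le n Polynomial.natDegree_linear_le).trans_lt (by simpa)
  have hdiff := congrFun (Polynomial.fwdDiff_iter_eq_zero_of_degree_lt hdeg) 0
  rw [fwdDiff_iter_eq_sum_shift] at hdiff
  simpa [P, add_comm x, mul_comm (N.choose _ : R)] using hdiff

theorem abelSeq_mul_pow_succ_sub {n k : ℕ} (h : k ≤ n + 1) :
    abelSeq x a k * (x + a * k) ^ (n + 1 - k) = x * (x + a * k) ^ n := by
  cases k with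
  | zero => simp [abelSeq, pow_succ']
  | succ k =>
    rw [abelSeq, Nat.add_sub_add_right, Nat.cast_succ, mul_assoc, ← pow_add,
      Nat.add_sub_of_le (Nat.le_of_succ_le_succ h)]

theorem sum_choose_mul_abelSeq_mul_neg_pow (n : ℕ) :
    ∑ k ∈ range (n + 1), n.choose k * abelSeq x a k * (-(x + a * k)) ^ (n - k) =
      if n = 0 then 1 else 0 := by
  cases n with
  | zero => simp [abelSeq]
  | succ n =>
    rw [if_neg n.succ_ne_zero, ← mul_zero x,
      ← sum_choose_mul_neg_one_pow_mul_linear_pow x a n.lt_succ_self, mul_sum]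
    refine sum_congr rfl fun k hk ↦ ?_
    rw [neg_pow]
    linear_combination ((n + 1).choose k * (-1) ^ (n + 1 - k) : R) *
      abelSeq_mul_pow_succ_sub x a (mem_range_succ_iff.mp hk)

-- Expanding via `y - a k = (x + y) - (x + a k)` leaves only the top power of `x + y`.
theorem sum_choose_mul_abelSeq_mul_sub_pow (y : R) (n : ℕ) :
    ∑ k ∈ range (n + 1), n.choose k * abelSeq x a k * (y - a * k) ^ (n - k) = (x + y) ^ n := by
  have hsplit (k : ℕ) : y - a * k = x + y + -(x + a * k) := by ring
  simp only [hsplit, sum_choose_mul_add_pow, sum_choose_mul_abelSeq_mul_neg_pow, mul_ite, mul_one,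
    mul_zero]
  simp

end Abel

section Egf

variable {R : Type*} [CommSemiring R] [Algebra ℚ R]

/-- The exponential generating function `∑ f(n) zⁿ / n!` of a sequence in a `ℚ`-algebra. -/
noncomputable def egf (f : ℕ → R) : R⟦X⟧ :=
  mk fun n ↦ (n ! : ℚ)⁻¹ • f n

theorem coeff_egf (f : ℕ → R) (n : ℕ) : coeff n (egf f) = (n ! : ℚ)⁻¹ • f n :=
  coeff_mk _ _

theorem constantCoeff_egf (f : ℕ → R) : constantCoeff (egf f) = f 0 := by
  simp [egf]

theorem smul_egf (c : R) (f : ℕ → R) : c • egf f = egf (c • f) := by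
  ext n
  simp only [coeff_smul, coeff_egf, Pi.smul_apply, smul_comm c]

theorem derivative_egf (f : ℕ → R) : d⁄dX R (egf f) = egf fun n ↦ f (n + 1) := by
  ext n
  have hfact : ((n + 1)! : ℚ)⁻¹ * (n + 1) = (n ! : ℚ)⁻¹ := by
    rw [Nat.factorial_succ]
    push_cast
    field_simp
  rw [coeff_derivative, coeff_egf, coeff_egf, ← hfact, mul_smul, smul_mul_assoc, mul_comm]
  congr 1
  exact_mod_cast (Algebra.smul_def ((n : ℚ) + 1) (f (n + 1))).symm

theorem egf_mul_egf (f g : ℕ → R) :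
    egf f * egf g = egf fun n ↦ ∑ k ∈ range (n + 1), n.choose k * f k * g (n - k) := by
  ext n
  rw [coeff_mul, Nat.sum_antidiagonal_eq_sum_range_succ_mk, coeff_egf, smul_sum]
  refine sum_congr rfl fun k hk ↦ ?_
  have hfact : (n ! : ℚ)⁻¹ * n.choose k = (k ! : ℚ)⁻¹ * ((n - k)! : ℚ)⁻¹ := by
    rw [Nat.cast_choose ℚ (mem_range_succ_iff.mp hk)]
    field_simp
  rw [coeff_egf, coeff_egf, smul_mul_smul_comm, ← hfact, mul_smul, mul_assoc,
    ← nsmul_eq_mul, Nat.cast_smul_eq_nsmul]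

theorem egf_eq_mk_div {K : Type*} [Field K] [Algebra ℚ K] (f : ℕ → K) :
    egf f = mk fun n ↦ f n / n ! := by
  ext n
  simp [coeff_egf, Algebra.smul_def, div_eq_inv_mul]

end Egf

theorem eq_of_derivative_eq_mul {R : Type*} [CommSemiring R] [IsAddTorsionFree R] {G E H : R⟦X⟧}
    (hE : d⁄dX R E = G * E) (hH : d⁄dX R H = G * H) (h₀ : constantCoeff E = constantCoeff H) :
    E = H := by
  ext n
  induction n using Nat.strong_induction_on with
  | h n ih =>
    cases n with
    | zero => simpa using h₀
    | succ n =>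
      have hmul : coeff n (G * E) = coeff n (G * H) := by
        rw [coeff_mul, coeff_mul]
        refine sum_congr rfl fun p hp ↦ ?_
        rw [ih p.2 (Nat.antidiagonal.snd_lt hp)]
      rw [← hE, ← hH, coeff_derivative, coeff_derivative] at hmul
      refine nsmul_right_injective n.succ_ne_zero ?_
      simpa [mul_comm] using hmul

theorem coeff_subst_eq_sum_range {R S : Type*} [CommRing R] [CommRing S] [Algebra R S]
    {F : S⟦X⟧} (hF : constantCoeff F = 0) (f : R⟦X⟧) (n : ℕ) :
    coeff n (f.subst F) = ∑ m ∈ range (n + 1), coeff m f • coeff n (F ^ m) := by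
  rw [coeff_subst' (.of_constantCoeff_zero' hF)]
  refine finsum_eq_sum_of_support_subset _ fun m hm ↦ ?_
  contrapose! hm
  have hlt : n < m := by simpa using hm
  have hpow : coeff n (F ^ m) = 0 :=
    X_pow_dvd_iff.mp (pow_dvd_pow_of_dvd (X_dvd_iff.mpr hF) m) n hlt
  simp [hpow]

theorem expPS_eq_exp_subst {F : ℚ⟦X⟧} (hF : constantCoeff F = 0) :
    expPS F = (exp ℚ).subst F := by
  ext n
  simp [expPS, coeff_subst_eq_sum_range hF, div_eq_inv_mul]

section Exp

variable {R : Type*} [CommRing R] [Algebra ℚ R]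

theorem derivative_exp_subst {F : R⟦X⟧} (hF : constantCoeff F = 0) :
    d⁄dX R ((exp R).subst F) = d⁄dX R F * (exp R).subst F := by
  rw [derivative_subst (.of_constantCoeff_zero' hF), derivative_exp, mul_comm]

theorem constantCoeff_exp_subst {F : R⟦X⟧} (hF : constantCoeff F = 0) :
    constantCoeff ((exp R).subst F) = 1 := by
  rw [← coeff_zero_eq_constantCoeff_apply, coeff_subst_eq_sum_range hF]
  simp

theorem exp_subst_smul_egf_treeSeq (x a : R) :
    (exp R).subst (x • egf (treeSeq a)) = egf (abelSeq x a) := by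
  have : IsAddTorsionFree R := .of_module_rat R
  have h₀ : constantCoeff (x • egf (treeSeq a)) = 0 := by
    simp [smul_egf, constantCoeff_egf, treeSeq]
  refine eq_of_derivative_eq_mul (derivative_exp_subst h₀) ?_ ?_
  · rw [smul_egf, derivative_egf, derivative_egf, mul_comm, egf_mul_egf]
    congr 1
    funext n
    rw [abelSeq, ← sum_choose_mul_abelSeq_mul_sub_pow x a (a * (n + 1)), mul_sum]
    refine sum_congr rfl fun k hk ↦ ?_
    have hk : k ≤ n := mem_range_succ_iff.mp hk
    have harg : a * ((n - k : ℕ) + 1) = a * (n + 1) - a * k := by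
      rw [Nat.cast_sub hk]
      ring
    rw [Pi.smul_apply, treeSeq, smul_eq_mul, harg]
    ring
  · rw [constantCoeff_exp_subst h₀, constantCoeff_egf, abelSeq]

end Exp

theorem stmt_10_general {R : Type*} [CommRing R] [Algebra ℚ R] (q : R) :
    (exp R).subst (q • egf fun k ↦ if k = 0 then 0 else (q * (q - 1)) ^ (k - 1) * k ^ (k - 1)) =
      egf fun k ↦ q ^ k * ((q - 1) * k + 1) ^ (k - 1) := by
  have htree : (fun k : ℕ ↦ if k = 0 then 0 else (q * (q - 1)) ^ (k - 1) * (k : R) ^ (k - 1)) =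
      treeSeq (q * (q - 1)) := by
    funext k
    cases k <;> simp [treeSeq, mul_pow]
  have habel : (fun k : ℕ ↦ q ^ k * ((q - 1) * k + 1) ^ (k - 1)) = abelSeq q (q * (q - 1)) := by
    funext k
    cases k with
    | zero => simp [abelSeq]
    | succ k =>
      rw [abelSeq, pow_succ', mul_assoc, Nat.add_sub_cancel, ← mul_pow]
      push_cast
      ring
  rw [htree, habel, exp_subst_smul_egf_treeSeq]

/-- For `q ≥ 2`, as formal power series in `ℚ[[z]]`,
`exp(q · ∑_{k≥1} (q(q-1))^(k-1)·k^(k-1)·z^k/k!) = ∑_{k≥0} q^k·((q-1)k+1)^(k-1)·z^k/k!`. -/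
theorem stmt_10 (q : ℕ) (hq : 2 ≤ q) :
    expPS ((q : ℚ) • PowerSeries.mk fun k =>
        if k = 0 then 0
        else ((q * (q - 1) : ℕ) : ℚ) ^ (k - 1) * (k : ℚ) ^ (k - 1) / (Nat.factorial k : ℚ))
      = PowerSeries.mk fun k =>
        (q : ℚ) ^ k * (((q - 1) * k + 1 : ℕ) : ℚ) ^ (k - 1) / (Nat.factorial k : ℚ) := by
  have hpred : ((q - 1 : ℕ) : ℚ) = q - 1 := Nat.cast_pred (by omega)
  rw [expPS_eq_exp_subst (by simp)]
  simpa [egf_eq_mk_div, ite_div, hpred] using stmt_10_general (q : ℚ)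
end
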